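/- Suppose α_1 ≠ 0 and f = (f_0, f_1, f_2) is a holomorphic solution of the A_2^(1) system with parameters α on a punctured disk D \ {t_0} whose Laurent expansions at t_0 are f_0 = −1/T + c_0^0 + O(T), f_1 = −α_1 T + c_2^1 T^2 + O(T^3), f_2 = 1/T + c_0^0 + O(T) where T = t − t_0. Then the functions g_0 = f_0 − α_1/f_1, g_1 = f_1, g_2 = f_2 + α_1/f_1 extend holomorphically across t_0, solve the A_2^(1) system with parameters β = (α_0 + α_1, −α_1, α_2 + α_1), and satisfy g_0(t_0) = c_0^0 + c_2^1/α_1, g_1(t_0) = 0, g_2(t_0) = c_0^0 − c_2^1/α_1. -/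

import Mathlib

open Metric Topology Asymptotics

/-! With `T = t - t₀`, the hypotheses give `f₁ = T (-α₁ + c₂¹ T + o(T))`, hence
`α₁ / f₁ = -1/T - c₂¹/α₁ + o(1)`. The poles of `f₀` and `f₂` therefore cancel in `f₀ - α₁/f₁` and
`f₂ + α₁/f₁`, and the three functions `gᵢ` have finite limits at `t₀`, equal to the stated values.
Giving them these values at `t₀` makes them continuous there.

Off `t₀` the system for `g` is an algebraic identity following from the system for `f`.
By the removable singularity theorem each `gᵢ` is analytic at `t₀`, so its derivative is continuous,
and the differential equation passes to the limit `t → t₀`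
(`hasDerivAt_of_punctured`). -/

/-- A complex function continuous at `x` whose derivative near `x`, off `x`, is given by a function
continuous at `x`, also has that derivative at `x`: the singularity is removable and the derivative
of the resulting analytic function is continuous. -/
lemma hasDerivAt_of_punctured {F R : ℂ → ℂ} {x : ℂ}
    (h : ∀ᶠ z in 𝓝[≠] x, HasDerivAt F (R z) z) (hF : ContinuousAt F x)
    (hR : ContinuousAt R x) : HasDerivAt F (R x) x := by
  have hA : AnalyticAt ℂ F x :=
    Complex.analyticAt_of_differentiable_on_punctured_nhds_of_continuousAt
      (h.mono fun z hz => hz.differentiableAt) hF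
  have h1 : Filter.Tendsto (deriv F) (𝓝[≠] x) (𝓝 (deriv F x)) :=
    hA.deriv.continuousAt.tendsto.mono_left nhdsWithin_le_nhds
  have h2 : Filter.Tendsto (deriv F) (𝓝[≠] x) (𝓝 (R x)) :=
    (hR.tendsto.mono_left nhdsWithin_le_nhds).congr' (h.mono fun z hz => hz.deriv.symm)
  rw [← tendsto_nhds_unique h1 h2]
  exact hA.differentiableAt.hasDerivAt

/-- If `u = -a T + c T² + O(T³)` with `a ≠ 0`, then `u` has no zeros near `x` off `x`, tends to
`0`, and `a / u = -1/T - c/a + o(1)`. -/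
lemma inv_expansion {u : ℂ → ℂ} {x a c : ℂ} (ha : a ≠ 0)
    (h : (fun t => u t - (-a * (t - x) + c * (t - x) ^ 2)) =O[𝓝[≠] x] fun t => (t - x) ^ 3) :
    (∀ᶠ t in 𝓝[≠] x, u t ≠ 0) ∧ Filter.Tendsto u (𝓝[≠] x) (𝓝 0) ∧
      Filter.Tendsto (fun t => a / u t + (t - x)⁻¹) (𝓝[≠] x) (𝓝 (-(c / a))) := by
  have hT : Filter.Tendsto (fun t : ℂ => t - x) (𝓝[≠] x) (𝓝 0) := by
    have : ContinuousAt (fun t : ℂ => t - x) x := by fun_prop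
    simpa using this.tendsto.mono_left nhdsWithin_le_nhds
  have hne : ∀ᶠ t in 𝓝[≠] x, t - x ≠ 0 := by
    filter_upwards [self_mem_nhdsWithin] with t ht
    exact sub_ne_zero.2 ht
  -- `s` is the remainder divided by `T²`.
  obtain ⟨s, hs⟩ : ∃ s : ℂ → ℂ,
      s = fun t => (u t - (-a * (t - x) + c * (t - x) ^ 2)) * ((t - x) ^ 2)⁻¹ := ⟨_, rfl⟩
  have hs0 : Filter.Tendsto s (𝓝[≠] x) (𝓝 0) := by
    have h' : s =O[𝓝[≠] x] fun t => (t - x) ^ 3 * ((t - x) ^ 2)⁻¹ := by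
      rw [hs]
      exact h.mul (isBigO_refl _ _)
    refine (h'.congr' Filter.EventuallyEq.rfl ?_).trans_tendsto hT
    filter_upwards [hne] with t ht
    field_simp
  have hu : ∀ᶠ t in 𝓝[≠] x, u t = (t - x) * (-a + (t - x) * (c + s t)) := by
    filter_upwards [hne] with t ht
    rw [hs]
    field_simp
    ring
  have hv : Filter.Tendsto (fun t => -a + (t - x) * (c + s t)) (𝓝[≠] x) (𝓝 (-a)) := by
    simpa using (hT.mul (hs0.const_add c)).const_add (-a)
  have hv0 : ∀ᶠ t in 𝓝[≠] x, -a + (t - x) * (c + s t) ≠ 0 :=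
    hv.eventually_ne (neg_ne_zero.2 ha)
  refine ⟨?_, ?_, ?_⟩
  · filter_upwards [hne, hu, hv0] with t h1 h2 h3
    rw [h2]
    exact mul_ne_zero h1 h3
  · have := hT.mul hv
    rw [zero_mul] at this
    exact this.congr' (hu.mono fun t ht => ht.symm)
  · have := (hs0.const_add c).div hv (neg_ne_zero.2 ha)
    rw [add_zero, div_neg] at this
    refine this.congr' ?_
    filter_upwards [hne, hu, hv0] with t h1 h2 h3
    simp only [Pi.div_apply]
    rw [h2]
    generalize hd : -a + (t - x) * (c + s t) = d at h3 ⊢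
    field_simp
    rw [← hd]
    ring

/-- Suppose `α₁ ≠ 0` and `f = (f₀,f₁,f₂)` solves the `A₂⁽¹⁾` system on a
punctured disk around `t₀`, with Laurent behaviour
`f₀ = −1/T + c₀⁰ + O(T)`, `f₁ = −α₁T + c₂¹T² + O(T³)`, `f₂ = 1/T + c₀⁰ + O(T)`.
Then `g₀ = f₀ − α₁/f₁`, `g₁ = f₁`, `g₂ = f₂ + α₁/f₁` extend holomorphically
across `t₀`, solve the `A₂⁽¹⁾` system with parameters
`β = (α₀+α₁, −α₁, α₂+α₁)`, and take the stated values at `t₀`. -/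
theorem backlund_s1_holomorphic_A2 (α : Fin 3 → ℂ) (t0 : ℂ) (ρ : ℝ) (hρ : 0 < ρ)
    (hα1 : α 1 ≠ 0) (f : Fin 3 → ℂ → ℂ) (c00 c21 : ℂ)
    (hf : ∀ i : Fin 3, ∀ t ∈ ball t0 ρ \ {t0},
      HasDerivAt (f i) (f i t * (f (i + 1) t - f (i + 2) t) + α i) t)
    (h0 : (fun t => f 0 t - (-(t - t0)⁻¹ + c00)) =O[𝓝[≠] t0] fun t => t - t0)
    (h1 : (fun t => f 1 t - (-α 1 * (t - t0) + c21 * (t - t0) ^ 2)) =O[𝓝[≠] t0]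
      fun t => (t - t0) ^ 3)
    (h2 : (fun t => f 2 t - ((t - t0)⁻¹ + c00)) =O[𝓝[≠] t0] fun t => t - t0) :
    ∃ ε > (0 : ℝ), ε ≤ ρ ∧ ∃ g : Fin 3 → ℂ → ℂ,
      (∀ i : Fin 3, DifferentiableOn ℂ (g i) (ball t0 ε)) ∧
      (∀ t ∈ ball t0 ε \ {t0},
        g 0 t = f 0 t - α 1 / f 1 t ∧ g 1 t = f 1 t ∧
          g 2 t = f 2 t + α 1 / f 1 t) ∧
      (∀ i : Fin 3, ∀ t ∈ ball t0 ε,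
        HasDerivAt (g i)
          (g i t * (g (i + 1) t - g (i + 2) t) +
            ![α 0 + α 1, -α 1, α 2 + α 1] i) t) ∧
      g 0 t0 = c00 + c21 / α 1 ∧ g 1 t0 = 0 ∧ g 2 t0 = c00 - c21 / α 1 := by
  obtain ⟨hnz, hlim1, hlimw⟩ := inv_expansion hα1 h1
  have hT : Filter.Tendsto (fun t : ℂ => t - t0) (𝓝[≠] t0) (𝓝 0) := by
    have : ContinuousAt (fun t : ℂ => t - t0) t0 := by fun_prop
    simpa using this.tendsto.mono_left nhdsWithin_le_nhds
  have hl0 := h0.trans_tendsto hT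
  have hl2 := h2.trans_tendsto hT
  obtain ⟨δ, hδ, hδnz⟩ : ∃ δ > 0, ∀ t ∈ ball t0 δ \ {t0}, f 1 t ≠ 0 := by
    obtain ⟨δ, hδ, hsub⟩ := Metric.mem_nhdsWithin_iff.1 hnz
    exact ⟨δ, hδ, fun t ht => hsub ht⟩
  let G : Fin 3 → ℂ → ℂ :=
    ![fun t => f 0 t - α 1 / f 1 t, f 1, fun t => f 2 t + α 1 / f 1 t]
  let L : Fin 3 → ℂ := ![c00 + c21 / α 1, 0, c00 - c21 / α 1]
  let g : Fin 3 → ℂ → ℂ := fun i => Function.update (G i) t0 (L i)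
  have hGL : ∀ i, Filter.Tendsto (G i) (𝓝[≠] t0) (𝓝 (L i)) := by
    intro i
    fin_cases i
    · have := (hl0.sub hlimw).add_const c00
      refine Filter.Tendsto.congr (fun t => ?_) (this.trans (le_of_eq (congrArg 𝓝 ?_)))
      · simp [G]; ring
      · simp [L]; ring
    · exact hlim1
    · have := (hl2.add hlimw).add_const c00
      refine Filter.Tendsto.congr (fun t => ?_) (this.trans (le_of_eq (congrArg 𝓝 ?_)))
      · simp [G]; ring
      · simp [L]; ring
  have hgc : ∀ i, ContinuousAt (g i) t0 := fun i => continuousAt_update_same.2 (hGL i)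
  have hgG : ∀ i, ∀ t, t ≠ t0 → g i t = G i t := fun i t ht => Function.update_of_ne ht _ _
  let R : Fin 3 → ℂ → ℂ := fun i t => g i t * (g (i + 1) t - g (i + 2) t) +
    ![α 0 + α 1, -α 1, α 2 + α 1] i
  have hpunct : ∀ i, ∀ t ∈ ball t0 (min ρ δ) \ {t0}, HasDerivAt (g i) (R i t) t := by
    intro i t ht
    have htne : t ≠ t0 := ht.2
    have htρ : t ∈ ball t0 ρ \ {t0} := ⟨ball_subset_ball (min_le_left _ _) ht.1, ht.2⟩
    have hz : f 1 t ≠ 0 := hδnz t ⟨ball_subset_ball (min_le_right _ _) ht.1, ht.2⟩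
    have e0 := hf 0 t htρ
    have e1 := hf 1 t htρ
    have e2 := hf 2 t htρ
    have ew := (hasDerivAt_const t (α 1)).div e1 hz
    have hev : g i =ᶠ[𝓝 t] G i := by
      filter_upwards [isOpen_ne.mem_nhds htne] with y hy using hgG i y hy
    refine HasDerivAt.congr_of_eventuallyEq ?_ hev
    simp only [R, hgG _ t htne]
    fin_cases i
    · refine (e0.sub ew).congr_deriv ?_
      simp [G]
      field_simp
      ring
    · refine e1.congr_deriv ?_
      simp [G]
      field_simp
      ring
    · refine (e2.add ew).congr_deriv ?_
      simp [G]
      field_simp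
      ring
  have hε : 0 < min ρ δ := lt_min hρ hδ
  have hall : ∀ i, ∀ t ∈ ball t0 (min ρ δ), HasDerivAt (g i) (R i t) t := by
    intro i t ht
    by_cases h : t = t0
    · subst h
      refine hasDerivAt_of_punctured ?_ (hgc i)
        (((hgc i).mul ((hgc (i + 1)).sub (hgc (i + 2)))).add continuousAt_const)
      exact Metric.mem_nhdsWithin_iff.2 ⟨_, hε, fun z hz => hpunct i z hz⟩
    · exact hpunct i t ⟨ht, h⟩
  refine ⟨min ρ δ, hε, min_le_left _ _, g, fun i t ht =>
    (hall i t ht).differentiableAt.differentiableWithinAt, fun t ht =>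
    ⟨hgG 0 t ht.2, hgG 1 t ht.2, hgG 2 t ht.2⟩, hall, ?_, ?_, ?_⟩ <;> simp [g, L]
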